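/- There exists a constant C ≥ 0 (depending only on X and k) such that for every ε ∈ [0, 1] and every Borel measurable function rd : ℝ → ℝ satisfying |rd(x) − x| ≤ ε·|x| for all x ∈ ℝ, one has |M_k[rd(X)] − M_k[X]| ≤ C·ε. -/

import Mathlib

open MeasureTheory

theorem centered_moments_first_order_mult
    {Ω : Type*} [MeasurableSpace Ω] (P : Measure Ω) [IsProbabilityMeasure P]
    (k : ℕ) (hk : 1 ≤ k)
    (X : Ω → ℝ) (hX : Measurable X)
    (hmom : Integrable (fun ω => |X ω| ^ k) P) :
    ∃ C : ℝ, 0 ≤ C ∧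
      ∀ ε : ℝ, ε ∈ Set.Icc (0 : ℝ) 1 →
        ∀ rd : ℝ → ℝ, Measurable rd → (∀ x : ℝ, |rd x - x| ≤ ε * |x|) →
          |(∫ ω, (rd (X ω) - ∫ ω', rd (X ω') ∂P) ^ k ∂P)
            - ∫ ω, (X ω - ∫ ω', X ω' ∂P) ^ k ∂P| ≤ C * ε := by
  have hk0 : k ≠ 0 := by omega
  have hL : MemLp X k P := by
    rw [← integrable_norm_rpow_iff hX.aestronglyMeasurable (by exact_mod_cast hk0) (ENNReal.natCast_ne_top k)]
    simpa using hmom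
  have hX1 : Integrable X P := hL.integrable (by exact_mod_cast hk)
  have hA : Integrable (fun ω => |X ω|) P := hX1.abs
  obtain ⟨m, hm⟩ : ∃ m, m = ∫ ω, |X ω| ∂P := ⟨_, rfl⟩
  have hm0 : 0 ≤ m := hm ▸ integral_nonneg (fun _ => abs_nonneg _)
  have hY0 : ∀ ω, 0 ≤ |X ω| + m := fun ω => add_nonneg (abs_nonneg _) hm0
  have hYL : MemLp (fun ω => |X ω| + m) k P := hL.abs.add (memLp_const m)
  have hY : Integrable (fun ω => (|X ω| + m) ^ k) P := by
    refine (hYL.integrable_norm_pow hk0).congr (Filter.Eventually.of_forall fun ω => ?_)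
    simp only [Real.norm_eq_abs, abs_of_nonneg (hY0 ω)]
  have hYi : 0 ≤ ∫ ω, (|X ω| + m) ^ k ∂P := integral_nonneg fun ω => pow_nonneg (hY0 ω) k
  -- general bound for a measurable perturbation
  have key : ∀ ε : ℝ, ε ∈ Set.Icc (0 : ℝ) 1 →
      ∀ rd : ℝ → ℝ, Measurable rd → (∀ x : ℝ, |rd x - x| ≤ ε * |x|) →
        Integrable (fun ω => rd (X ω)) P ∧
        (∀ ω, |rd (X ω) - ∫ ω', rd (X ω') ∂P| ≤ 2 * (|X ω| + m)) ∧
        Integrable (fun ω => (rd (X ω) - ∫ ω', rd (X ω') ∂P) ^ k) P := by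
    intro ε hε rd hrd h
    have hb : ∀ x, |rd x| ≤ 2 * |x| := by
      intro x
      have h1 := h x
      have h2 : ε * |x| ≤ 1 * |x| := mul_le_mul_of_nonneg_right hε.2 (abs_nonneg x)
      have h3 := abs_sub_abs_le_abs_sub (rd x) x
      linarith
    have hmeas : Measurable (fun ω => rd (X ω)) := hrd.comp hX
    have hi : Integrable (fun ω => rd (X ω)) P :=
      (hA.const_mul 2).mono' hmeas.aestronglyMeasurable
        (Filter.Eventually.of_forall fun ω => hb (X ω))
    have hE : |∫ ω, rd (X ω) ∂P| ≤ 2 * m := by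
      calc |∫ ω, rd (X ω) ∂P| ≤ ∫ ω, |rd (X ω)| ∂P := abs_integral_le_integral_abs
        _ ≤ ∫ ω, 2 * |X ω| ∂P :=
            integral_mono hi.abs (hA.const_mul 2) fun ω => hb (X ω)
        _ = 2 * m := by rw [integral_const_mul, hm]
    have hB : ∀ ω, |rd (X ω) - ∫ ω', rd (X ω') ∂P| ≤ 2 * (|X ω| + m) := by
      intro ω
      have := abs_sub (rd (X ω)) (∫ ω', rd (X ω') ∂P)
      have := hb (X ω)
      linarith
    refine ⟨hi, hB, ?_⟩
    refine (hY.const_mul (2 ^ k)).mono'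
      ((hmeas.sub_const _).pow_const k).aestronglyMeasurable
      (Filter.Eventually.of_forall fun ω => ?_)
    rw [norm_pow, Real.norm_eq_abs, ← mul_pow]
    exact pow_le_pow_left₀ (abs_nonneg _) (hB ω) k
  refine ⟨k * 2 ^ (k - 1) * ∫ ω, (|X ω| + m) ^ k ∂P, by positivity, ?_⟩
  intro ε hε rd hrd h
  obtain ⟨hi, hB, hI⟩ := key ε hε rd hrd h
  obtain ⟨-, hB', hI'⟩ := key 0 (by simp) (fun x => x) measurable_id (by simp)
  have hEd : |(∫ ω, rd (X ω) ∂P) - ∫ ω, X ω ∂P| ≤ ε * m := by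
    rw [← integral_sub hi hX1]
    calc |∫ ω, (rd (X ω) - X ω) ∂P| ≤ ∫ ω, |rd (X ω) - X ω| ∂P := abs_integral_le_integral_abs
      _ ≤ ∫ ω, ε * |X ω| ∂P :=
          integral_mono (hi.sub hX1).abs (hA.const_mul ε) fun ω => h (X ω)
      _ = ε * m := by rw [integral_const_mul, hm]
  have hpt : ∀ ω, |(rd (X ω) - ∫ ω', rd (X ω') ∂P) ^ k - (X ω - ∫ ω', X ω' ∂P) ^ k|
      ≤ (k * 2 ^ (k - 1) * ε) * (|X ω| + m) ^ k := by
    intro ω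
    have hd : |(rd (X ω) - ∫ ω', rd (X ω') ∂P) - (X ω - ∫ ω', X ω' ∂P)|
        ≤ ε * (|X ω| + m) := by
      have h1 := abs_sub (rd (X ω) - X ω) ((∫ ω', rd (X ω') ∂P) - ∫ ω', X ω' ∂P)
      have h2 := h (X ω)
      rw [sub_sub_sub_comm]
      linarith
    have hε0 := hε.1
    have hy := hY0 ω
    calc _ ≤ _ := abs_pow_sub_pow_le _ _ _
      _ ≤ (ε * (|X ω| + m)) * k * (2 * (|X ω| + m)) ^ (k - 1) := by
        gcongr
        exact max_le (hB ω) (hB' ω)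
      _ = (k * 2 ^ (k - 1) * ε) * ((|X ω| + m) ^ (k - 1) * (|X ω| + m)) := by
        rw [mul_pow]; ring
      _ = _ := by rw [pow_sub_one_mul hk0]
  rw [← integral_sub hI hI']
  calc _ ≤ _ := abs_integral_le_integral_abs
    _ ≤ ∫ ω, (k * 2 ^ (k - 1) * ε) * (|X ω| + m) ^ k ∂P :=
        integral_mono (hI.sub hI').abs (hY.const_mul _) hpt
    _ = _ := by rw [integral_const_mul]; ring
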